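/- Let n ≥ 1, let p be a real number with p ≠ −(n+1), and let K be a smooth, strictly convex body in ℝ^{n+1} with positive support function h satisfying det(A(x) + x⊗x) = h(x)^{p−1} for all x ∈ S^n (i.e. dV = h^p dθ). Then for all w₁, w₂ ∈ ℝ^{n+1}: ∫_{S^n} ⟨x, w₁⟩⟨x, w₂⟩ h(x)^p dθ(x) = ((∫_{S^n} h^p dθ)/(n+1))·⟨w₁, w₂⟩; that is, the matrix ∫ x⊗x dV equals ((∫ dV)/(n+1))·Id. -/

import Mathlib

open MeasureTheory Metric Real
open scoped InnerProductSpace ENNReal Topology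

noncomputable section

/-- Euclidean space `ℝ^{n+1}`. -/
abbrev Eu (n : ℕ) : Type := EuclideanSpace ℝ (Fin (n + 1))

/-- The unit sphere `S^n ⊆ ℝ^{n+1}` as a subtype. -/
abbrev Sph (n : ℕ) : Type := Metric.sphere (0 : Eu n) 1

/-- The spherical Lebesgue (surface) measure on `S^n`. -/
def sphMeas (n : ℕ) : Measure (Sph n) := (volume : Measure (Eu n)).toSphere

/-- The support function of a set `K ⊆ ℝ^{n+1}`. -/
def sfn {n : ℕ} (K : Set (Eu n)) (z : Eu n) : ℝ :=
  sSup ((fun y => ⟪z, y⟫_ℝ) '' K)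

/-- The Hessian endomorphism `A(x) = D(∇ h_K)(x)`. -/
def hessA {n : ℕ} (K : Set (Eu n)) (x : Eu n) : Eu n →L[ℝ] Eu n :=
  fderiv ℝ (gradient (sfn K)) x

/-- The rank-one endomorphism `x ⊗ x : v ↦ ⟨v, x⟩ x`. -/
def tens {n : ℕ} (x : Eu n) : Eu n →L[ℝ] Eu n :=
  (innerSL ℝ x).smulRight x

/-- `det (A(x) + x ⊗ x)`, the reciprocal Gauss curvature `1/𝒦` at `x ∈ S^n`. -/
def rK {n : ℕ} (K : Set (Eu n)) (x : Eu n) : ℝ :=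
  LinearMap.det ((hessA K x + tens x : Eu n →L[ℝ] Eu n) : Eu n →ₗ[ℝ] Eu n)

/-- `K` is a smooth, strictly convex body with positive support function. -/
structure IsSmoothConvexBody {n : ℕ} (K : Set (Eu n)) : Prop where
  compact : IsCompact K
  convex : Convex ℝ K
  interior_nonempty : (interior K).Nonempty
  pos : ∀ x : Sph n, 0 < sfn K x
  smooth : ContDiffOn ℝ (⊤ : ℕ∞) (sfn K) {(0 : Eu n)}ᶜ
  posdef : ∀ x : Sph n, ∀ v : Eu n, v ≠ 0 →
    0 < ⟪(hessA K (x : Eu n) + tens (x : Eu n)) v, v⟫_ℝ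

/-- The density `h·det(A + x⊗x)` of the measure `dV` with respect to `dθ`. -/
def dens {n : ℕ} (K : Set (Eu n)) (x : Eu n) : ℝ := sfn K x * rK K x

/-- The centroid-type point `c(K) = (∫ ∇h_K dV)/(∫ dV)`. -/
def cK {n : ℕ} (K : Set (Eu n)) : Eu n :=
  (∫ x : Sph n, dens K x ∂sphMeas n)⁻¹ •
    ∫ x : Sph n, dens K x • gradient (sfn K) x ∂sphMeas n

/-- The support function of the translated body `K - c(K)`. -/
def tsfn {n : ℕ} (K : Set (Eu n)) (x : Eu n) : ℝ := sfn K x - ⟪x, cK K⟫_ℝ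

/-!
Write `V = ∫ h^p dθ` and `J = ∫ ∂_{w₂}h · h^(p-1) ⟨x, w₁⟩ dθ`. The divergence theorem
`∫_{∂K} y ⊗ ν = vol(K) • Id`, pulled back to the sphere by the inverse Gauss map, reads
`(n + 1) J = V ⟨w₁, w₂⟩`; it follows from the Piola identity for the map `y ↦ ‖y‖ • ∇h(y)`.
The divergence theorem on the sphere, applied to the homogeneous function `h^p ⟨·, w₁⟩`, gives
`(n + 1 + p) ∫ ⟨x, w₁⟩ ⟨x, w₂⟩ h^p dθ = p J + V ⟨w₁, w₂⟩`. Eliminating `J` leaves an equation that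
determines the integral unless `n + 1 + p = 0`.
-/

section PosHomogeneous

variable {E F : Type*} [NormedAddCommGroup E] [NormedSpace ℝ E]
  [NormedAddCommGroup F] [NormedSpace ℝ F] {m k : ℝ}

/-- `f` is positively homogeneous of degree `m` away from the origin. Nothing is required at `0`,
where functions such as `‖·‖ ^ m` take junk values. -/
def IsPosHomogeneous (f : E → F) (m : ℝ) : Prop :=
  ∀ ⦃x : E⦄, x ≠ 0 → ∀ ⦃t : ℝ⦄, 0 < t → f (t • x) = t ^ m • f x

theorem isPosHomogeneous_norm : IsPosHomogeneous (fun x : E ↦ ‖x‖) 1 := fun x _ t ht ↦ by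
  simp only [norm_smul, norm_of_nonneg ht.le, rpow_one, smul_eq_mul]

theorem isPosHomogeneous_clm (L : E →L[ℝ] F) : IsPosHomogeneous L 1 :=
  fun x _ t _ ↦ by rw [map_smul, rpow_one]

namespace IsPosHomogeneous

variable {f : E → F} {φ : E → ℝ}

protected theorem smul (hφ : IsPosHomogeneous φ k) (hf : IsPosHomogeneous f m) :
    IsPosHomogeneous (fun x ↦ φ x • f x) (k + m) := fun x hx t ht ↦ by
  simp only [hφ hx ht, hf hx ht, rpow_add ht, smul_smul, smul_eq_mul]
  ring_nf

theorem clm_comp {G : Type*} [NormedAddCommGroup G] [NormedSpace ℝ G]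
    (L : F →L[ℝ] G) (hf : IsPosHomogeneous f m) : IsPosHomogeneous (fun x ↦ L (f x)) m :=
  fun x hx t ht ↦ by simp only [hf hx ht, map_smul]

protected theorem rpow (hφ : IsPosHomogeneous φ m) (hpos : ∀ x ≠ 0, 0 < φ x) (p : ℝ) :
    IsPosHomogeneous (fun x ↦ φ x ^ p) (m * p) := fun x hx t ht ↦ by
  simp only [hφ hx ht, smul_eq_mul]
  rw [mul_rpow (rpow_nonneg ht.le m) (hpos x hx).le, rpow_mul ht.le]

protected theorem fderiv (hf : IsPosHomogeneous f m) : IsPosHomogeneous (fderiv ℝ f) (m - 1) :=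
  fun x hx t ht ↦ by
    have hscaled : (fun y ↦ f (t • y)) =ᶠ[𝓝 x] t ^ m • f := by
      filter_upwards [isOpen_ne.mem_nhds hx] with y hy using hf hy ht
    have h := hscaled.fderiv_eq (𝕜 := ℝ)
    rw [fderiv_comp_smul, fderiv_const_smul_field, Pi.smul_apply] at h
    rw [rpow_sub_one ht.ne', div_eq_inv_mul, mul_smul, ← h, inv_smul_smul₀ ht.ne']

theorem fderiv_apply (hf : IsPosHomogeneous f m) (v : E) :
    IsPosHomogeneous (fun x ↦ fderiv ℝ f x v) (m - 1) :=
  hf.fderiv.clm_comp (ContinuousLinearMap.apply ℝ F v)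

theorem fderiv_apply_self (hf : IsPosHomogeneous f m) {x : E} (hx : x ≠ 0)
    (hfx : DifferentiableAt ℝ f x) : fderiv ℝ f x x = m • f x := by
  have hray : HasDerivAt (fun t : ℝ ↦ f (t • x)) (fderiv ℝ f x x) 1 := by
    have hline : HasDerivAt (fun t : ℝ ↦ t • x) x 1 := by
      simpa using (hasDerivAt_id (1 : ℝ)).smul_const x
    exact HasFDerivAt.comp_hasDerivAt_of_eq 1 hfx.hasFDerivAt hline (one_smul ℝ x).symm
  have hpow : HasDerivAt (fun t : ℝ ↦ t ^ m • f x) (m • f x) 1 := by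
    simpa using (hasDerivAt_rpow_const (p := m) (.inl one_ne_zero)).smul_const (f x)
  refine hray.unique (hpow.congr_of_eventuallyEq ?_)
  filter_upwards [lt_mem_nhds zero_lt_one] with t ht using hf hx ht

theorem pos_of_pos_on_sphere (hφ : IsPosHomogeneous φ m) (hpos : ∀ x : sphere (0 : E) 1, 0 < φ x)
    {x : E} (hx : x ≠ 0) : 0 < φ x := by
  have hunit : ‖x‖⁻¹ • x ∈ sphere (0 : E) 1 := by simp [norm_smul, hx]
  have h := hφ hx (inv_pos.2 (norm_pos_iff.2 hx)) ▸ hpos ⟨_, hunit⟩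
  exact pos_of_mul_pos_right h (by positivity)

end IsPosHomogeneous

end PosHomogeneous

section Determinant

theorem det_add_smulRight {R M : Type*} [CommRing R] [AddCommGroup M] [Module R M]
    [Module.Free R M] [Module.Finite R M] {ℓ : Module.Dual R M} {A : M →ₗ[R] M}
    (hA : ∀ v, ℓ (A v) = 0) {x : M} (hx : ℓ x = 1) (u : M) :
    LinearMap.det (A + ℓ.smulRight u) = ℓ u * LinearMap.det (A + ℓ.smulRight x) := by
  have hfactor : A + ℓ.smulRight u =
      LinearMap.transvection ℓ (u - x) ∘ₗ (A + ℓ.smulRight x) := by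
    ext v
    simp [LinearMap.transvection.apply, hA, hx, smul_sub]
  rw [hfactor, LinearMap.det_comp, LinearMap.transvection.det, map_sub, hx, add_sub_cancel]

variable {𝕜 E : Type*} [NontriviallyNormedField 𝕜] [NormedAddCommGroup E] [NormedSpace 𝕜 E]
  [FiniteDimensional 𝕜 E]

theorem hasDerivAt_det_one_add_smul (N : E →L[𝕜] E) :
    HasDerivAt (fun t : 𝕜 ↦ (1 + t • N).det) (LinearMap.trace 𝕜 E N) 0 := by
  let b := Module.finBasis 𝕜 E
  have hmatrix (t : 𝕜) : (1 + t • N).det = (1 + t • LinearMap.toMatrix b b N).det := by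
    rw [ContinuousLinearMap.det, ← LinearMap.det_toMatrix b]
    simp
  rw [funext fun t ↦ (hmatrix t).trans (Matrix.det_one_add_smul t _),
    LinearMap.trace_eq_matrix_trace 𝕜 b]
  refine HasDerivAt.congr_deriv ((((hasDerivAt_id (0 : 𝕜)).const_mul _).const_add 1).add
    ((Polynomial.hasDerivAt _ (0 : 𝕜)).mul (hasDerivAt_pow 2 (0 : 𝕜)))) ?_
  simp

variable [CompleteSpace 𝕜]

theorem isInvertible_of_det_ne_zero {T : E →L[𝕜] E} (hT : T.det ≠ 0) : T.IsInvertible :=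
  ⟨T.toContinuousLinearEquivOfDetNeZero hT, T.coe_toContinuousLinearEquivOfDetNeZero hT⟩

theorem contDiff_det {n : WithTop ℕ∞} : ContDiff 𝕜 n fun T : E →L[𝕜] E ↦ T.det := by
  let b := Module.finBasis 𝕜 E
  have hentry (i j) : ContDiff 𝕜 n fun T : E →L[𝕜] E ↦ LinearMap.toMatrix b b T i j := by
    simp only [LinearMap.toMatrix_apply]
    exact ((b.coord i).toContinuousLinearMap ∘L ContinuousLinearMap.apply 𝕜 E (b j)).contDiff
  simp only [ContinuousLinearMap.det, ← LinearMap.det_toMatrix b, Matrix.det_apply]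
  exact ContDiff.sum fun σ _ ↦ (contDiff_prod fun i _ ↦ hentry _ i).const_smul _

theorem fderiv_det_apply {T : E →L[𝕜] E} (hT : T.IsInvertible) (N : E →L[𝕜] E) :
    fderiv 𝕜 (fun S : E →L[𝕜] E ↦ S.det) T N =
      T.det * LinearMap.trace 𝕜 E (T.inverse ∘L N) := by
  have hline : HasDerivAt (fun t : 𝕜 ↦ T + t • N) N 0 := by
    simpa using ((hasDerivAt_id (0 : 𝕜)).smul_const N).const_add T
  have hchain : HasDerivAt (fun t : 𝕜 ↦ (T + t • N).det)
      (fderiv 𝕜 (fun S : E →L[𝕜] E ↦ S.det) T N) 0 :=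
    ((contDiff_det (n := 1)).differentiable one_ne_zero T).hasFDerivAt.comp_hasDerivAt_of_eq 0
      hline (by simp)
  have hfactor (t : 𝕜) : (T + t • N).det = T.det * (1 + t • (T.inverse ∘L N)).det := by
    have : T + t • N = T ∘L (1 + t • (T.inverse ∘L N)) := by
      ext v
      simp [hT.self_apply_inverse]
    rw [this]
    exact LinearMap.det_comp _ _
  simp only [hfactor] at hchain
  exact hchain.unique ((hasDerivAt_det_one_add_smul (T.inverse ∘L N)).const_mul T.det)

end Determinant

section Piola

variable {E : Type*} [NormedAddCommGroup E] [NormedSpace ℝ E]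

/-- The divergence of the vector field `V` at `x`, as the trace of its derivative. -/
def divergence (V : E → E) (x : E) : ℝ :=
  LinearMap.trace ℝ E (fderiv ℝ V x)

/-- The adjugate of an invertible endomorphism, as `det T • T⁻¹`. If `T` is not invertible then
`T.inverse = 0`, and so this is `0` rather than the true adjugate. -/
def adjugateOfInvertible (T : E →L[ℝ] E) : E →L[ℝ] E :=
  T.det • T.inverse

theorem divergence_smul [FiniteDimensional ℝ E] {φ : E → ℝ} {V : E → E} {x : E}
    (hφ : DifferentiableAt ℝ φ x) (hV : DifferentiableAt ℝ V x) :
    divergence (fun y ↦ φ y • V y) x = φ x * divergence V x + fderiv ℝ φ x (V x) := by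
  rw [divergence, fderiv_fun_smul hφ hV, divergence]
  simp

theorem eventually_isInvertible_fderiv [CompleteSpace E] {F : E → E} {x : E}
    (hF : ContinuousAt (fderiv ℝ F) x) (hx : (fderiv ℝ F x).IsInvertible) :
    ∀ᶠ y in 𝓝 x, (fderiv ℝ F y).IsInvertible :=
  hF.eventually (ContinuousLinearEquiv.isOpen.mem_nhds hx)

theorem fderiv_inverse_fderiv_apply [CompleteSpace E] {F : E → E} {x : E} (hF : ContDiffAt ℝ 2 F x)
    (hx : (fderiv ℝ F x).IsInvertible) (a v : E) :
    fderiv ℝ (fun y ↦ (fderiv ℝ F y).inverse a) x v =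
      -(fderiv ℝ F x).inverse (fderiv ℝ (fderiv ℝ F) x v ((fderiv ℝ F x).inverse a)) := by
  have hF' : ContDiffAt ℝ 1 (fderiv ℝ F) x := hF.fderiv_right (by norm_num)
  have hw : ContDiffAt ℝ 1 (fun y ↦ (fderiv ℝ F y).inverse a) x :=
    (hx.contDiffAt_map_inverse.comp x hF').clm_apply contDiffAt_const
  have hconst : (fun y ↦ fderiv ℝ F y ((fderiv ℝ F y).inverse a)) =ᶠ[𝓝 x] fun _ ↦ a :=
    (eventually_isInvertible_fderiv hF'.continuousAt hx).mono fun y hy ↦ hy.self_apply_inverse a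
  have h := congrArg (· v) (hconst.fderiv_eq (𝕜 := ℝ))
  rw [fderiv_clm_apply (hF'.differentiableAt one_ne_zero) (hw.differentiableAt one_ne_zero)] at h
  have hsum : fderiv ℝ F x (fderiv ℝ (fun y ↦ (fderiv ℝ F y).inverse a) x v) +
      fderiv ℝ (fderiv ℝ F) x v ((fderiv ℝ F x).inverse a) = 0 := by simpa using h
  rw [← map_neg, ← eq_neg_of_add_eq_zero_left hsum, hx.inverse_apply_self]

variable [FiniteDimensional ℝ E] {F : E → E} {x : E}

theorem fderiv_det_fderiv_apply (hF : ContDiffAt ℝ 2 F x) (hx : (fderiv ℝ F x).IsInvertible)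
    (v : E) :
    fderiv ℝ (fun y ↦ (fderiv ℝ F y).det) x v = (fderiv ℝ F x).det *
      LinearMap.trace ℝ E ((fderiv ℝ F x).inverse ∘L fderiv ℝ (fderiv ℝ F) x v) := by
  have hF' : DifferentiableAt ℝ (fderiv ℝ F) x :=
    (hF.fderiv_right (m := 1) (by norm_num)).differentiableAt one_ne_zero
  have hdet := (contDiff_det (𝕜 := ℝ) (E := E) (n := 1)).differentiable one_ne_zero (fderiv ℝ F x)
  rw [← fderiv_det_apply hx]
  exact DFunLike.congr_fun (fderiv_comp x hdet hF') v

/-- The Piola identity: the derivative of `det DF` along `(DF)⁻¹ a` cancels the divergence of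
`(DF)⁻¹ a` because `D²F` is symmetric. -/
theorem divergence_adjugate_fderiv (hF : ContDiffAt ℝ 2 F x) (hx : (fderiv ℝ F x).IsInvertible)
    (a : E) : divergence (fun y ↦ adjugateOfInvertible (fderiv ℝ F y) a) x = 0 := by
  have hF' : ContDiffAt ℝ 1 (fderiv ℝ F) x := hF.fderiv_right (by norm_num)
  have hdet : DifferentiableAt ℝ (fun y ↦ (fderiv ℝ F y).det) x :=
    (contDiff_det.contDiffAt.comp x hF').differentiableAt one_ne_zero
  have hw : DifferentiableAt ℝ (fun y ↦ (fderiv ℝ F y).inverse a) x :=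
    ((hx.contDiffAt_map_inverse.comp x hF').clm_apply contDiffAt_const).differentiableAt one_ne_zero
  have hsymm : fderiv ℝ (fun y ↦ (fderiv ℝ F y).inverse a) x =
      -((fderiv ℝ F x).inverse ∘L fderiv ℝ (fderiv ℝ F) x ((fderiv ℝ F x).inverse a)) := by
    ext v
    rw [fderiv_inverse_fderiv_apply hF hx, hF.isSymmSndFDerivAt (by simp) v]
    rfl
  change divergence (fun y ↦ (fderiv ℝ F y).det • (fderiv ℝ F y).inverse a) x = 0
  rw [divergence_smul hdet hw, divergence, hsymm, fderiv_det_fderiv_apply hF hx]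
  simp

theorem contDiffAt_adjugate_fderiv_apply (hF : ContDiffAt ℝ 2 F x)
    (hx : (fderiv ℝ F x).IsInvertible) (a : E) :
    ContDiffAt ℝ 1 (fun y ↦ adjugateOfInvertible (fderiv ℝ F y) a) x := by
  have hF' : ContDiffAt ℝ 1 (fderiv ℝ F) x := hF.fderiv_right (by norm_num)
  exact (contDiff_det.contDiffAt.comp x hF').smul
    ((hx.contDiffAt_map_inverse.comp x hF').clm_apply contDiffAt_const)

theorem divergence_smul_adjugate_fderiv (hF : ContDiffAt ℝ 2 F x)
    (hx : (fderiv ℝ F x).IsInvertible) (ℓ : E →L[ℝ] ℝ) (a : E) :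
    divergence (fun y ↦ ℓ (F y) • adjugateOfInvertible (fderiv ℝ F y) a) x =
      (fderiv ℝ F x).det * ℓ a := by
  have hℓ : HasFDerivAt (fun y ↦ ℓ (F y)) (ℓ ∘L fderiv ℝ F x) x :=
    ℓ.hasFDerivAt.comp x (hF.differentiableAt two_ne_zero).hasFDerivAt
  rw [divergence_smul hℓ.differentiableAt
      ((contDiffAt_adjugate_fderiv_apply hF hx a).differentiableAt one_ne_zero),
    divergence_adjugate_fderiv hF hx, mul_zero, zero_add, hℓ.fderiv]
  simp [adjugateOfInvertible, hx.self_apply_inverse]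

end Piola

section IntegrationByParts

theorem integrable_mul_of_hasCompactSupport {X : Type*} [TopologicalSpace X] [MeasurableSpace X]
    [OpensMeasurableSpace X] {μ : Measure X} [IsFiniteMeasureOnCompacts μ] {χ g : X → ℝ}
    (hχ : Continuous χ) (hχs : HasCompactSupport χ) (hg : ∀ x ∈ tsupport χ, ContinuousAt g x) :
    Integrable (fun x ↦ χ x * g x) μ :=
  (continuous_of_tsupport fun x hx ↦ hχ.continuousAt.mul
    (hg x (tsupport_mul_subset_left hx))).integrable_of_hasCompactSupport hχs.mul_right

variable {E : Type*} [NormedAddCommGroup E] [NormedSpace ℝ E] [FiniteDimensional ℝ E]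
  [MeasurableSpace E] [BorelSpace E] {μ : Measure E}

theorem integral_mul_fderiv_eq_neg_of_hasCompactSupport [μ.IsAddHaarMeasure] {χ f : E → ℝ}
    (hχ : ContDiff ℝ 1 χ) (hχs : HasCompactSupport χ)
    (hf : ∀ x ∈ tsupport χ, ContDiffAt ℝ 1 f x) (v : E) :
    ∫ x, χ x * fderiv ℝ f x v ∂μ = -∫ x, fderiv ℝ χ x v * f x ∂μ := by
  have hχ' : Continuous fun x ↦ fderiv ℝ χ x v :=
    (hχ.continuous_fderiv one_ne_zero).clm_apply continuous_const
  refine integral_mul_fderiv_eq_neg_fderiv_mul_of_integrable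
    (integrable_mul_of_hasCompactSupport hχ' (hχs.fderiv_apply (𝕜 := ℝ) v) fun x hx ↦
      (hf x (tsupport_fderiv_apply_subset ℝ v hx)).continuousAt)
    (integrable_mul_of_hasCompactSupport hχ.continuous hχs fun x hx ↦
      ((hf x hx).continuousAt_fderiv one_ne_zero).clm_apply continuousAt_const)
    (integrable_mul_of_hasCompactSupport hχ.continuous hχs fun x hx ↦ (hf x hx).continuousAt)
    (fun x _ ↦ hχ.differentiable one_ne_zero x)
    (fun x hx ↦ (hf x hx).differentiableAt one_ne_zero)

theorem integral_Ioi_deriv_mul_rpow {η : ℝ → ℝ} (hη : ContDiff ℝ 1 η)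
    (hηs : HasCompactSupport η) (hη0 : tsupport η ⊆ Set.Ioi 0) (s : ℝ) :
    ∫ r in Set.Ioi 0, deriv η r * r ^ s = -(s * ∫ r in Set.Ioi 0, η r * r ^ (s - 1)) := by
  have hpow (r : ℝ) (hr : r ∈ tsupport η) : ContDiffAt ℝ 1 (fun r : ℝ ↦ r ^ s) r :=
    contDiffAt_rpow_const_of_ne (hη0 hr).ne'
  have hparts := integral_mul_fderiv_eq_neg_of_hasCompactSupport (μ := volume) hη hηs hpow 1
  simp only [fderiv_apply_one_eq_deriv] at hparts
  have hzero {g : ℝ → ℝ} (hg : tsupport g ⊆ tsupport η) {r : ℝ} (hr : r ∉ Set.Ioi 0) : g r = 0 :=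
    image_eq_zero_of_notMem_tsupport fun h ↦ hr (hη0 (hg h))
  rw [setIntegral_eq_integral_of_forall_compl_eq_zero fun r hr ↦
      mul_eq_zero_of_left (hzero tsupport_deriv_subset hr) _,
    setIntegral_eq_integral_of_forall_compl_eq_zero fun r hr ↦
      mul_eq_zero_of_left (hzero le_rfl hr) _, ← integral_const_mul, ← neg_eq_iff_eq_neg, ← hparts]
  refine integral_congr_ae (.of_forall fun r ↦ ?_)
  by_cases hr : r ∈ Set.Ioi (0 : ℝ)
  · simp only [Real.deriv_rpow_const]
    ring
  · simp [hzero le_rfl hr]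

end IntegrationByParts

section SphereDivergence

theorem hasCompactSupport_comp_norm {E : Type*} [SeminormedAddCommGroup E] [ProperSpace E]
    {η : ℝ → ℝ} (hη : HasCompactSupport η) : HasCompactSupport fun x : E ↦ η ‖x‖ := by
  obtain ⟨R, hR⟩ := hη.isCompact.isBounded.subset_closedBall 0
  refine .of_support_subset_isCompact (isCompact_closedBall (0 : E) R) fun x hx ↦ ?_
  simpa using hR (subset_tsupport η hx)

theorem integral_volumeIoiPow {F : Type*} [NormedAddCommGroup F] [NormedSpace ℝ F] (n : ℕ)
    (g : ℝ → F) : ∫ r, g r ∂.volumeIoiPow n = ∫ r in Set.Ioi (0 : ℝ), r ^ n • g r := by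
  simp only [Measure.volumeIoiPow, ENNReal.ofReal]
  rw [integral_withDensity_eq_integral_smul (measurable_subtype_coe.pow_const _).real_toNNReal,
    integral_subtype_comap measurableSet_Ioi fun r : ℝ ↦ Real.toNNReal (r ^ n) • g r]
  refine setIntegral_congr_fun measurableSet_Ioi fun r hr ↦ ?_
  simp only [NNReal.smul_def, Real.coe_toNNReal _ (pow_nonneg (Set.mem_Ioi.1 hr).le _)]

variable {E : Type*} [NormedAddCommGroup E] [InnerProductSpace ℝ E] {η : ℝ → ℝ}

theorem hasFDerivAt_norm {x : E} (hx : x ≠ 0) :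
    HasFDerivAt (fun y : E ↦ ‖y‖) (‖x‖⁻¹ • innerSL ℝ x) x := by
  have h := (hasStrictFDerivAt_norm_sq x).hasFDerivAt.sqrt (by positivity)
  simp only [Real.sqrt_sq (norm_nonneg _)] at h
  convert h using 1
  ext v
  simp only [smul_apply, coe_innerSL_apply, smul_eq_mul, one_div, mul_inv_rev, nsmul_eq_mul,
    Nat.cast_ofNat]
  ring

theorem contDiff_comp_norm (hη : ContDiff ℝ 1 η) (hη0 : tsupport η ⊆ Set.Ioi 0) :
    ContDiff ℝ 1 fun x : E ↦ η ‖x‖ := by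
  refine contDiff_iff_contDiffAt.2 fun x ↦ ?_
  obtain rfl | hx := eq_or_ne x 0
  · have hvanish : η =ᶠ[𝓝 ‖(0 : E)‖] 0 :=
      notMem_tsupport_iff_eventuallyEq.1 fun h ↦ by simpa using hη0 h
    exact contDiffAt_const.congr_of_eventuallyEq (continuous_norm.tendsto 0 |>.eventually hvanish)
  · exact hη.contDiffAt.comp x (contDiffAt_norm ℝ hx)

theorem fderiv_comp_norm_apply {x : E} (hx : x ≠ 0) (hη : DifferentiableAt ℝ η ‖x‖) (v : E) :
    fderiv ℝ (fun y : E ↦ η ‖y‖) x v = deriv η ‖x‖ * ‖x‖⁻¹ * ⟪x, v⟫_ℝ := by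
  have h : HasFDerivAt (fun y : E ↦ η ‖y‖) (deriv η ‖x‖ • ‖x‖⁻¹ • innerSL ℝ x) x :=
    hη.hasDerivAt.comp_hasFDerivAt x (hasFDerivAt_norm hx)
  simp [h.fderiv, mul_assoc]

theorem exists_contDiff_tsupport_subset_Ioi_forall_integral_rpow_ne_zero :
    ∃ η : ℝ → ℝ, ContDiff ℝ 1 η ∧ HasCompactSupport η ∧ tsupport η ⊆ Set.Ioi 0 ∧
      ∀ s : ℝ, ∫ r in Set.Ioi 0, η r * r ^ s ≠ 0 := by
  let η : ContDiffBump (2 : ℝ) := ⟨1 / 2, 1, by norm_num, by norm_num⟩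
  have hη0 : tsupport η ⊆ Set.Ioi 0 := fun r hr ↦ by
    rw [η.tsupport_eq, mem_closedBall, Real.dist_eq, abs_le] at hr
    have : η.rOut = 1 := rfl
    simp only [Set.mem_Ioi]
    linarith [hr.1]
  refine ⟨η, η.contDiff, η.hasCompactSupport, hη0, fun s ↦ ne_of_gt ?_⟩
  have hcont : Continuous fun r ↦ η r * r ^ s := continuous_of_tsupport fun r hr ↦
    η.continuous.continuousAt.mul <|
      continuousAt_rpow_const _ _ (.inl (hη0 (tsupport_mul_subset_left hr)).ne')
  have hnonneg : 0 ≤ᵐ[volume.restrict (Set.Ioi 0)] fun r ↦ η r * r ^ s :=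
    (ae_restrict_mem measurableSet_Ioi).mono fun r hr ↦ mul_nonneg η.nonneg (rpow_nonneg hr.le s)
  have hint : IntegrableOn (fun r ↦ η r * r ^ s) (Set.Ioi 0) :=
    (hcont.integrable_of_hasCompactSupport η.hasCompactSupport.mul_right).integrableOn
  rw [setIntegral_pos_iff_support_of_nonneg_ae hnonneg hint]
  have hball : ball (2 : ℝ) 1 ⊆ Function.support (fun r ↦ η r * r ^ s) ∩ Set.Ioi 0 := fun r hr ↦ by
    have hηr : 0 < η r := η.pos_of_mem_ball hr
    have hr0 : 0 < r := hη0 (subset_tsupport _ hηr.ne')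
    exact ⟨(mul_pos hηr (rpow_pos_of_pos hr0 s)).ne', hr0⟩
  exact (measure_ball_pos volume _ one_pos).trans_le (measure_mono hball)

variable [FiniteDimensional ℝ E] [MeasurableSpace E] [BorelSpace E]
  (μ : Measure E) [μ.IsAddHaarMeasure]

theorem integrable_toSphere_of_continuousAt {f : E → ℝ} (hf : ∀ x ≠ 0, ContinuousAt f x) :
    Integrable (fun x : sphere (0 : E) 1 ↦ f x) μ.toSphere := by
  have hcont : Continuous fun x : sphere (0 : E) 1 ↦ f x := continuous_iff_continuousAt.2 fun x ↦
    (hf x (ne_zero_of_mem_unit_sphere x)).comp continuous_subtype_val.continuousAt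
  exact hcont.integrable_of_hasCompactSupport (.of_compactSpace _)

variable [Nontrivial E] {f : E → ℝ} {m : ℝ}

open Module (finrank)

theorem integral_comp_norm_mul_eq (hf : IsPosHomogeneous f m) (ρ : ℝ → ℝ) :
    ∫ x, ρ ‖x‖ * f x ∂μ =
      (∫ r in Set.Ioi 0, ρ r * r ^ (finrank ℝ E - 1 + m)) *
        ∫ x : sphere (0 : E) 1, f x ∂μ.toSphere := by
  have hdim : ((finrank ℝ E - 1 : ℕ) : ℝ) = finrank ℝ E - 1 := by
    rw [Nat.cast_sub Module.finrank_pos, Nat.cast_one]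
  have hpolar (x : ({0}ᶜ : Set E)) : ρ ‖(x : E)‖ * f x =
      f (homeomorphUnitSphereProd E x).1 *
        (ρ (homeomorphUnitSphereProd E x).2 * (homeomorphUnitSphereProd E x).2.1 ^ m) := by
    have hx := congrArg Subtype.val ((homeomorphUnitSphereProd E).symm_apply_apply x)
    rw [homeomorphUnitSphereProd_symm_apply_coe] at hx
    generalize homeomorphUnitSphereProd E x = z at hx ⊢
    obtain ⟨u, r⟩ := z
    rw [← hx, hf (ne_zero_of_mem_unit_sphere u) r.2, norm_smul, norm_eq_of_mem_sphere, mul_one,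
      norm_of_nonneg r.2.le, smul_eq_mul]
    ring
  calc ∫ x, ρ ‖x‖ * f x ∂μ
      = ∫ x : ({0}ᶜ : Set E), ρ ‖(x : E)‖ * f x ∂μ.comap (↑) := by
        rw [integral_subtype_comap (measurableSet_singleton _).compl fun x ↦ ρ ‖x‖ * f x,
          restrict_compl_singleton]
    _ = ∫ z : sphere (0 : E) 1 × Set.Ioi (0 : ℝ), f z.1 * (ρ z.2 * z.2.1 ^ m)
          ∂μ.toSphere.prod (.volumeIoiPow (finrank ℝ E - 1)) := by
        rw [← μ.measurePreserving_homeomorphUnitSphereProd.integral_comp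
          (Homeomorph.measurableEmbedding _)]
        exact integral_congr_ae (.of_forall hpolar)
    _ = (∫ x : sphere (0 : E) 1, f x ∂μ.toSphere) *
          ∫ r : Set.Ioi (0 : ℝ), ρ r * r.1 ^ m ∂.volumeIoiPow (finrank ℝ E - 1) :=
        integral_prod_mul (fun x : sphere (0 : E) 1 ↦ f x) fun r : Set.Ioi (0 : ℝ) ↦ ρ r * r.1 ^ m
    _ = _ := by
        rw [mul_comm, integral_volumeIoiPow _ fun r ↦ ρ r * r ^ m]
        congr 1
        refine setIntegral_congr_fun measurableSet_Ioi fun r hr ↦ ?_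
        simp only [rpow_add hr, ← hdim, rpow_natCast, smul_eq_mul]
        ring

/-- The divergence theorem for `f • v` on a spherical shell whose boundary is smeared out by
a radial cutoff. -/
theorem integral_toSphere_fderiv_apply (hf : IsPosHomogeneous f m)
    (hfs : ∀ x ≠ 0, ContDiffAt ℝ 1 f x) (v : E) :
    ∫ x : sphere (0 : E) 1, fderiv ℝ f x v ∂μ.toSphere =
      (finrank ℝ E - 1 + m) * ∫ x : sphere (0 : E) 1, ⟪(x : E), v⟫_ℝ * f x ∂μ.toSphere := by
  obtain ⟨η, hη, hηs, hη0, hmoment⟩ :=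
    exists_contDiff_tsupport_subset_Ioi_forall_integral_rpow_ne_zero
  have hparts := integral_mul_fderiv_eq_neg_of_hasCompactSupport (μ := μ)
    (contDiff_comp_norm hη hη0) (hasCompactSupport_comp_norm hηs)
    (fun x hx ↦ hfs x (norm_pos_iff.1 (hη0 (tsupport_comp_subset_preimage η continuous_norm hx)))) v
  have hcutoff : ∀ᵐ x ∂μ, fderiv ℝ (fun y : E ↦ η ‖y‖) x v * f x =
      deriv η ‖x‖ * ‖x‖⁻¹ * (⟪x, v⟫_ℝ * f x) := by
    filter_upwards [Measure.ae_ne μ 0] with x hx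
    rw [fderiv_comp_norm_apply hx (hη.differentiable one_ne_zero _), mul_assoc]
  have hinner : IsPosHomogeneous (fun x : E ↦ ⟪x, v⟫_ℝ * f x) (1 + m) := by
    simpa [real_inner_comm] using (isPosHomogeneous_clm (innerSL ℝ v)).smul hf
  rw [integral_congr_ae hcutoff,
    integral_comp_norm_mul_eq μ (hf.fderiv_apply v),
    integral_comp_norm_mul_eq μ hinner fun r ↦ deriv η r * r⁻¹] at hparts
  set s : ℝ := finrank ℝ E - 1 + m with hs
  have hradial : ∫ r in Set.Ioi 0, deriv η r * r⁻¹ * r ^ (finrank ℝ E - 1 + (1 + m)) =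
      -(s * ∫ r in Set.Ioi 0, η r * r ^ (s - 1)) := by
    rw [← integral_Ioi_deriv_mul_rpow hη hηs hη0]
    refine setIntegral_congr_fun measurableSet_Ioi fun r (hr : 0 < r) ↦ ?_
    rw [show finrank ℝ E - 1 + (1 + m) = s + 1 by rw [hs]; ring, rpow_add_one hr.ne']
    field_simp
  rw [hradial, show finrank ℝ E - 1 + (m - 1) = s - 1 by rw [hs]; ring] at hparts
  refine mul_left_cancel₀ (hmoment (s - 1)) ?_
  linear_combination hparts

theorem integral_toSphere_inner_mul_inner_mul_rpow (hf : IsPosHomogeneous f m)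
    (hfs : ∀ x ≠ 0, ContDiffAt ℝ 1 f x) (hpos : ∀ x ≠ 0, 0 < f x) (p : ℝ) (a b : E) :
    (finrank ℝ E + m * p) *
        ∫ x : sphere (0 : E) 1, ⟪(x : E), a⟫_ℝ * ⟪(x : E), b⟫_ℝ * f x ^ p ∂μ.toSphere =
      p * (∫ x : sphere (0 : E) 1, fderiv ℝ f x b * f x ^ (p - 1) * ⟪(x : E), a⟫_ℝ ∂μ.toSphere) +
        (∫ x : sphere (0 : E) 1, f x ^ p ∂μ.toSphere) * ⟪a, b⟫_ℝ := by
  have hcont (q : ℝ) (x : E) (hx : x ≠ 0) : ContDiffAt ℝ 1 (fun y ↦ f y ^ q) x :=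
    (hfs x hx).rpow_const_of_ne (hpos x hx).ne'
  have hhom : IsPosHomogeneous (fun x ↦ f x ^ p * ⟪a, x⟫_ℝ) (m * p + 1) :=
    (hf.rpow hpos p).smul (isPosHomogeneous_clm (innerSL ℝ a))
  have hdiv := integral_toSphere_fderiv_apply μ hhom
    (fun x hx ↦ (hcont p x hx).mul (innerSL ℝ a).contDiff.contDiffAt) b
  have hderiv (x : sphere (0 : E) 1) : fderiv ℝ (fun y ↦ f y ^ p * ⟪a, y⟫_ℝ) x b =
      p * (fderiv ℝ f x b * f x ^ (p - 1) * ⟪(x : E), a⟫_ℝ) + f x ^ p * ⟪a, b⟫_ℝ := by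
    have hx := ne_zero_of_mem_unit_sphere x
    have hrpow := ((hfs x hx).differentiableAt one_ne_zero).hasFDerivAt.rpow_const (p := p)
      (.inl (hpos x hx).ne')
    have hprod : HasFDerivAt (fun y ↦ f y ^ p * ⟪a, y⟫_ℝ) _ (x : E) :=
      hrpow.fun_mul (innerSL ℝ a).hasFDerivAt
    rw [hprod.fderiv, real_inner_comm]
    simp only [add_apply, smul_apply, coe_innerSL_apply, smul_eq_mul]
    ring
  have hint : Integrable (fun x : sphere (0 : E) 1 ↦
      fderiv ℝ f x b * f x ^ (p - 1) * ⟪(x : E), a⟫_ℝ) μ.toSphere :=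
    integrable_toSphere_of_continuousAt μ (f := fun x ↦ fderiv ℝ f x b * f x ^ (p - 1) * ⟪x, a⟫_ℝ)
      fun x hx ↦ ((((hfs x hx).continuousAt_fderiv one_ne_zero).clm_apply continuousAt_const).mul
        (hcont _ x hx).continuousAt).mul (continuousAt_id.inner continuousAt_const)
  have hint' : Integrable (fun x : sphere (0 : E) 1 ↦ f x ^ p) μ.toSphere :=
    integrable_toSphere_of_continuousAt μ fun x hx ↦ (hcont p x hx).continuousAt
  simp only [hderiv] at hdiv
  rw [integral_add (hint.const_mul p) (hint'.mul_const _), integral_const_mul,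
    integral_mul_const] at hdiv
  have hsymm (x : sphere (0 : E) 1) : ⟪(x : E), a⟫_ℝ * ⟪(x : E), b⟫_ℝ * f x ^ p =
      ⟪(x : E), b⟫_ℝ * (f x ^ p * ⟪a, x⟫_ℝ) := by
    rw [real_inner_comm a]
    ring
  simp only [hsymm, hdiv]
  ring

theorem integral_toSphere_divergence {V : E → E} (hV : IsPosHomogeneous V m)
    (hVs : ∀ x ≠ 0, ContDiffAt ℝ 1 V x) :
    ∫ x : sphere (0 : E) 1, divergence V x ∂μ.toSphere =
      (finrank ℝ E - 1 + m) * ∫ x : sphere (0 : E) 1, ⟪(x : E), V x⟫_ℝ ∂μ.toSphere := by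
  let b := stdOrthonormalBasis ℝ E
  have hcoord (i) : IsPosHomogeneous (fun x ↦ ⟪b i, V x⟫_ℝ) m := hV.clm_comp (innerSL ℝ (b i))
  have hcoords (i) (x : E) (hx : x ≠ 0) : ContDiffAt ℝ 1 (fun y ↦ ⟪b i, V y⟫_ℝ) x :=
    contDiffAt_const.inner ℝ (hVs x hx)
  have htrace (x : sphere (0 : E) 1) :
      divergence V x = ∑ i, fderiv ℝ (fun y ↦ ⟪b i, V y⟫_ℝ) x (b i) := by
    have hVx := (hVs x (ne_zero_of_mem_unit_sphere x)).differentiableAt one_ne_zero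
    rw [divergence, LinearMap.trace_eq_sum_inner _ b]
    refine Finset.sum_congr rfl fun i _ ↦ ?_
    simp [fderiv_inner_apply ℝ (differentiableAt_const _) hVx]
  have hinner (x : sphere (0 : E) 1) : ⟪(x : E), V x⟫_ℝ = ∑ i, ⟪(x : E), b i⟫_ℝ * ⟪b i, V x⟫_ℝ :=
    (b.sum_inner_mul_inner x (V x)).symm
  simp only [htrace, hinner]
  rw [integral_finsetSum _ fun i _ ↦ integrable_toSphere_of_continuousAt μ fun x hx ↦
      ((hcoords i x hx).continuousAt_fderiv one_ne_zero).clm_apply continuousAt_const,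
    integral_finsetSum _ fun i _ ↦ integrable_toSphere_of_continuousAt μ
      (f := fun x ↦ ⟪x, b i⟫_ℝ * ⟪b i, V x⟫_ℝ) fun x hx ↦
      (continuousAt_id.inner continuousAt_const).mul (hcoords i x hx).continuousAt,
    Finset.mul_sum]
  exact Finset.sum_congr rfl fun i _ ↦
    integral_toSphere_fderiv_apply μ (hcoord i) (hcoords i) (b i)

theorem integral_toSphere_det_fderiv {F : E → E} (hF : IsPosHomogeneous F 1)
    (hFs : ∀ x ≠ 0, ContDiffAt ℝ 2 F x)
    (hinv : ∀ x : sphere (0 : E) 1, (fderiv ℝ F x).IsInvertible) (ℓ : E →L[ℝ] ℝ) (a : E) :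
    ∫ x : sphere (0 : E) 1, (fderiv ℝ F x).det * ℓ a ∂μ.toSphere = finrank ℝ E *
      ∫ x : sphere (0 : E) 1,
        ℓ (F x) * ⟪(x : E), adjugateOfInvertible (fderiv ℝ F x) a⟫_ℝ ∂μ.toSphere := by
  have hF' : IsPosHomogeneous (fderiv ℝ F) 0 := by simpa using hF.fderiv
  have hinv' (x : E) (hx : x ≠ 0) : (fderiv ℝ F x).IsInvertible := by
    have hunit : ‖x‖⁻¹ • x ∈ sphere (0 : E) 1 := by simp [norm_smul, hx]
    simpa [hF' hx (inv_pos.2 (norm_pos_iff.2 hx))] using hinv ⟨_, hunit⟩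
  have hV : IsPosHomogeneous
      (fun x ↦ ℓ (F x) • adjugateOfInvertible (fderiv ℝ F x) a) 1 := by
    have hadj : IsPosHomogeneous (fun x ↦ adjugateOfInvertible (fderiv ℝ F x) a) 0 :=
      fun x hx t ht ↦ by simp [hF' hx ht]
    simpa using (hF.clm_comp ℓ).smul hadj
  have hdiv := integral_toSphere_divergence μ hV fun x hx ↦
    (ℓ.contDiff.contDiffAt.comp x ((hFs x hx).of_le one_le_two)).smul
      (contDiffAt_adjugate_fderiv_apply (hFs x hx) (hinv' x hx) a)
  have hpiola (x : sphere (0 : E) 1) :=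
    divergence_smul_adjugate_fderiv (hFs x (ne_zero_of_mem_unit_sphere x)) (hinv x) ℓ a
  simpa only [hpiola, real_inner_smul_right, sub_add_cancel] using hdiv

end SphereDivergence

section Gradient

variable {E : Type*} [NormedAddCommGroup E] [InnerProductSpace ℝ E] [CompleteSpace E]
  {f : E → ℝ} {x : E} {m : ℝ}

theorem contDiffAt_gradient {n k : WithTop ℕ∞} (hf : ContDiffAt ℝ n f x) (hkn : k + 1 ≤ n) :
    ContDiffAt ℝ k (gradient f) x :=
  ((InnerProductSpace.toDual ℝ E).symm : (E →L[ℝ] ℝ) ≃ₗᵢ[ℝ] E).contDiff.contDiffAt.comp x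
    (hf.fderiv_right hkn)

namespace IsPosHomogeneous

protected theorem gradient (hf : IsPosHomogeneous f m) : IsPosHomogeneous (gradient f) (m - 1) :=
  fun x hx t ht ↦ ext_inner_right ℝ fun v ↦ by
    simp [inner_gradient_left, inner_smul_left, hf.fderiv hx ht]

theorem inner_fderiv_gradient (hf : IsPosHomogeneous f m) (hx : x ≠ 0) (hfx : ContDiffAt ℝ 2 f x)
    (v : E) : ⟪x, fderiv ℝ (gradient f) x v⟫_ℝ = (m - 1) * fderiv ℝ f x v := by
  have heuler : (fun y ↦ ⟪y, gradient f y⟫_ℝ) =ᶠ[𝓝 x] m • f := by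
    filter_upwards [isOpen_ne.mem_nhds hx, hfx.eventually (by simp)] with y hy hfy
    rw [inner_gradient_right, hf.fderiv_apply_self hy (hfy.differentiableAt two_ne_zero)]
    simp
  have hgrad := (contDiffAt_gradient hfx one_add_one_eq_two.le).differentiableAt one_ne_zero
  have h := DFunLike.congr_fun (heuler.fderiv_eq (𝕜 := ℝ)) v
  rw [fderiv_inner_apply ℝ differentiableAt_fun_id hgrad, fderiv_const_smul_field,
    inner_gradient_right, fderiv_fun_id] at h
  simp only [ContinuousLinearMap.id_apply, conj_trivial, Pi.smul_apply, smul_apply,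
    smul_eq_mul] at h
  linear_combination h

end IsPosHomogeneous

end Gradient

section Minkowski

variable {E : Type*} [NormedAddCommGroup E] [InnerProductSpace ℝ E] [FiniteDimensional ℝ E]
  {h : E → ℝ} {x : E}

/-- The determinant of `D(∇h) + x ⊗ x` at `x`. If `h` is a support function and `x` is a unit
vector, this is the reciprocal of the Gauss curvature at the boundary point with normal `x`. -/
def reciprocalGaussCurvature (h : E → ℝ) (x : E) : ℝ :=
  (fderiv ℝ (gradient h) x + (innerSL ℝ x).smulRight x).det

/-- The map `y ↦ ‖y‖ • ∇h(y)`. If `h` is the support function of a smooth strictly convex body `K`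
around the origin, this is the radial extension of the inverse Gauss map from the sphere to the
boundary of `K`, and it maps the unit ball onto `K`. -/
def ballParametrization (h : E → ℝ) (y : E) : E :=
  ‖y‖ • gradient h y

theorem isPosHomogeneous_ballParametrization (hh : IsPosHomogeneous h 1) :
    IsPosHomogeneous (ballParametrization h) 1 := by
  have hsmul := isPosHomogeneous_norm.smul hh.gradient
  rwa [sub_self, add_zero] at hsmul

theorem contDiffAt_ballParametrization {n k : WithTop ℕ∞} (hx : x ≠ 0) (hhx : ContDiffAt ℝ n h x)
    (hkn : k + 1 ≤ n) : ContDiffAt ℝ k (ballParametrization h) x :=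
  (contDiffAt_norm ℝ hx).smul (contDiffAt_gradient hhx hkn)

theorem fderiv_ballParametrization (hx : ‖x‖ = 1) (hhx : ContDiffAt ℝ 2 h x) :
    fderiv ℝ (ballParametrization h) x =
      fderiv ℝ (gradient h) x + (innerSL ℝ x).smulRight (gradient h x) := by
  have hnorm := hasFDerivAt_norm (norm_ne_zero_iff.1 (hx.trans_ne one_ne_zero))
  have hgrad := (contDiffAt_gradient hhx one_add_one_eq_two.le).differentiableAt one_ne_zero
  have hderiv : HasFDerivAt (ballParametrization h) _ x := hnorm.fun_smul hgrad.hasFDerivAt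
  rw [hderiv.fderiv]
  simp [hx]

theorem det_fderiv_ballParametrization (hx : ‖x‖ = 1) (hh : IsPosHomogeneous h 1)
    (hhx : ContDiffAt ℝ 2 h x) :
    (fderiv ℝ (ballParametrization h) x).det = h x * reciprocalGaussCurvature h x := by
  have hx0 : x ≠ 0 := norm_ne_zero_iff.1 (hx.trans_ne one_ne_zero)
  have heuler : ⟪x, gradient h x⟫_ℝ = h x := by
    simp [inner_gradient_right, hh.fderiv_apply_self hx0 (hhx.differentiableAt two_ne_zero)]
  have hnormal (v : E) : ⟪x, fderiv ℝ (gradient h) x v⟫_ℝ = 0 := by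
    simpa using hh.inner_fderiv_gradient hx0 hhx v
  rw [fderiv_ballParametrization hx hhx, ← heuler]
  exact det_add_smulRight (ℓ := (innerSL ℝ x : E →ₗ[ℝ] ℝ)) hnormal (by simp [hx]) _

theorem inner_fderiv_ballParametrization (hx : ‖x‖ = 1) (hh : IsPosHomogeneous h 1)
    (hhx : ContDiffAt ℝ 2 h x) (v : E) :
    ⟪x, fderiv ℝ (ballParametrization h) x v⟫_ℝ = h x * ⟪x, v⟫_ℝ := by
  have hx0 : x ≠ 0 := norm_ne_zero_iff.1 (hx.trans_ne one_ne_zero)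
  simp [fderiv_ballParametrization hx hhx, inner_add_right, inner_smul_right,
    hh.inner_fderiv_gradient hx0 hhx, inner_gradient_right,
    hh.fderiv_apply_self hx0 (hhx.differentiableAt two_ne_zero), mul_comm]

theorem inner_adjugate_fderiv_ballParametrization (hx : ‖x‖ = 1) (hh : IsPosHomogeneous h 1)
    (hhx : ContDiffAt ℝ 2 h x) (hinv : (fderiv ℝ (ballParametrization h) x).IsInvertible) (a : E) :
    ⟪x, adjugateOfInvertible (fderiv ℝ (ballParametrization h) x) a⟫_ℝ =
      reciprocalGaussCurvature h x * ⟪x, a⟫_ℝ := by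
  nth_rw 2 [← hinv.self_apply_inverse a]
  rw [inner_fderiv_ballParametrization hx hh hhx, adjugateOfInvertible, smul_apply,
    inner_smul_right, det_fderiv_ballParametrization hx hh hhx]
  ring

variable [Nontrivial E] [MeasurableSpace E] [BorelSpace E] (μ : Measure E) [μ.IsAddHaarMeasure]

open Module (finrank)

/-- For the support function of a body `K` this is the divergence theorem
`∫_{∂K} y ⊗ ν = vol(K) • Id`, pulled back to the sphere by the inverse Gauss map. -/
theorem integral_toSphere_fderiv_mul_reciprocalGaussCurvature (hh : IsPosHomogeneous h 1)
    (hhs : ∀ x ≠ 0, ContDiffAt ℝ 3 h x)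
    (hvol : ∀ x : sphere (0 : E) 1, h x * reciprocalGaussCurvature h x ≠ 0) (a b : E) :
    finrank ℝ E * ∫ x : sphere (0 : E) 1,
        fderiv ℝ h x b * reciprocalGaussCurvature h x * ⟪(x : E), a⟫_ℝ ∂μ.toSphere =
      (∫ x : sphere (0 : E) 1, h x * reciprocalGaussCurvature h x ∂μ.toSphere) * ⟪a, b⟫_ℝ := by
  have hh2 (x : sphere (0 : E) 1) : ContDiffAt ℝ 2 h x :=
    (hhs x (ne_zero_of_mem_unit_sphere x)).of_le (by norm_num)
  have hdet (x : sphere (0 : E) 1) :=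
    det_fderiv_ballParametrization (norm_eq_of_mem_sphere x) hh (hh2 x)
  have hinv (x : sphere (0 : E) 1) : (fderiv ℝ (ballParametrization h) x).IsInvertible :=
    isInvertible_of_det_ne_zero (hdet x ▸ hvol x)
  have hpiola := integral_toSphere_det_fderiv μ (isPosHomogeneous_ballParametrization hh)
    (fun x hx ↦ contDiffAt_ballParametrization hx (hhs x hx) (by norm_num)) hinv (innerSL ℝ b) a
  have hadj (x : sphere (0 : E) 1) := inner_adjugate_fderiv_ballParametrization
    (norm_eq_of_mem_sphere x) hh (hh2 x) (hinv x) a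
  have hvalue (x : sphere (0 : E) 1) : innerSL ℝ b (ballParametrization h x) = fderiv ℝ h x b := by
    simp [ballParametrization, inner_gradient_right]
  simp only [hdet, hadj, hvalue, integral_mul_const, innerSL_apply_apply, ← mul_assoc] at hpiola
  rw [← hpiola, real_inner_comm]

theorem isotropic_identity_general {p : ℝ} (hp : p ≠ -finrank ℝ E) (hh : IsPosHomogeneous h 1)
    (hhs : ∀ x ≠ 0, ContDiffAt ℝ 3 h x) (hpos : ∀ x : sphere (0 : E) 1, 0 < h x)
    (heq : ∀ x : sphere (0 : E) 1, reciprocalGaussCurvature h x = h x ^ (p - 1)) (a b : E) :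
    ∫ x : sphere (0 : E) 1, ⟪(x : E), a⟫_ℝ * ⟪(x : E), b⟫_ℝ * h x ^ p ∂μ.toSphere =
      (∫ x : sphere (0 : E) 1, h x ^ p ∂μ.toSphere) / finrank ℝ E * ⟪a, b⟫_ℝ := by
  have hvol (x : sphere (0 : E) 1) : h x * reciprocalGaussCurvature h x = h x ^ p := by
    rw [heq, mul_comm, ← rpow_add_one (hpos x).ne', sub_add_cancel]
  have hminkowski := integral_toSphere_fderiv_mul_reciprocalGaussCurvature μ hh hhs
    (fun x ↦ hvol x ▸ (rpow_pos_of_pos (hpos x) p).ne') a b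
  simp only [hvol] at hminkowski
  simp only [heq] at hminkowski
  have hdiv := integral_toSphere_inner_mul_inner_mul_rpow μ hh
    (fun x hx ↦ (hhs x hx).of_le (by norm_num)) (fun x ↦ hh.pos_of_pos_on_sphere hpos) p a b
  have hN : (finrank ℝ E : ℝ) ≠ 0 := Nat.cast_ne_zero.2 Module.finrank_pos.ne'
  have hNp : finrank ℝ E + p ≠ 0 := fun h ↦ hp (eq_neg_of_add_eq_zero_right h)
  rw [div_mul_eq_mul_div, eq_div_iff hN]
  refine mul_left_cancel₀ hNp ?_
  linear_combination finrank ℝ E * hdiv + p * hminkowski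

end Minkowski

theorem isPosHomogeneous_sfn {n : ℕ} (K : Set (Eu n)) : IsPosHomogeneous (sfn K) 1 :=
  fun x _ t ht ↦ by
    simp only [sfn, sSup_image', real_inner_smul_left, rpow_one, smul_eq_mul,
      Real.mul_iSup_of_nonneg ht.le]

/-- If `dV = h^p dθ` with `p ≠ −(n+1)`, then `∫ x ⊗ x dV = ((∫ dV)/(n+1)) Id`, i.e.
`∫ ⟨x,w₁⟩⟨x,w₂⟩ h^p dθ = ((∫ h^p dθ)/(n+1)) ⟨w₁,w₂⟩` for all `w₁, w₂`. -/
theorem isotropic_identity (n : ℕ) (hn : 1 ≤ n) (p : ℝ) (hp : p ≠ -((n : ℝ) + 1))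
    (K : Set (Eu n)) (hK : IsSmoothConvexBody K)
    (heq : ∀ x : Sph n, rK K (x : Eu n) = sfn K (x : Eu n) ^ (p - 1)) :
    ∀ w₁ w₂ : Eu n,
      ∫ x : Sph n, ⟪(x : Eu n), w₁⟫_ℝ * ⟪(x : Eu n), w₂⟫_ℝ * sfn K (x : Eu n) ^ p ∂sphMeas n =
        (∫ x : Sph n, sfn K (x : Eu n) ^ p ∂sphMeas n) / ((n : ℝ) + 1) * ⟪w₁, w₂⟫_ℝ := by
  have hsmooth (x : Eu n) (hx : x ≠ 0) : ContDiffAt ℝ 3 (sfn K) x :=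
    (hK.smooth.contDiffAt (isOpen_compl_singleton.mem_nhds hx)).of_le (WithTop.coe_le_coe.2 le_top)
  simpa [sphMeas] using isotropic_identity_general volume (by simpa using hp)
    (isPosHomogeneous_sfn K) hsmooth hK.pos heq
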